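/- arXiv:2410.05512 — 3 statements merged into one kernel-verified Lean document; each statement's English description precedes it below -/
import Mathlib

section
/- (Theorem 1, Dirichlet posterior of the Dirichlet-DSM.) Let U_1, …, U_n be i.i.d. uniform on [0,1], let x_1, …, x_n ∈ {1, …, K} be fixed labels with cell counts N_k = #{i : x_i = k} ≥ 1 for every k, and set Z_k = max{U_i : x_i = k}. Let S = {z ∈ ℝ^K : z_k > 0 for all k and Σ_{k=1}^K z_k < 1}. Then P(Σ_{k=1}^K Z_k < 1) > 0, and for every Borel set A ⊆ ℝ^K, the conditional probability satisfies P((Z_1, …, Z_K) ∈ A | Σ_{k=1}^K Z_k < 1) = (∫_{A ∩ S} ∏_{k=1}^K z_k^{N_k − 1} dz) / (∫_S ∏_{k=1}^K z_k^{N_k − 1} dz). In other words, conditionally on Σ_k Z_k < 1 the vector (1 − Σ_k Z_k, Z_1, …, Z_K) is Dirichlet(1, N_1, …, N_K) distributed. -/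
open MeasureTheory ProbabilityTheory

/-- The distribution function of the maximum of `m` independent uniform variables on `[0,1]`, through its
density `m * z ^ (m - 1)`. -/
lemma withDensity_uniform_Iic (m : ℕ) (hm : 1 ≤ m) (t : ℝ) :
    ((volume.restrict (Set.Ioc (0 : ℝ) 1)).withDensity
      (fun z => (m : ENNReal) * ENNReal.ofReal (z ^ (m - 1)))) (Set.Iic t) =
      (volume.restrict (Set.Ioc (0 : ℝ) 1) (Set.Iic t)) ^ m := by
  have hinter : Set.Iic t ∩ Set.Ioc (0 : ℝ) 1 = Set.Ioc 0 (min t 1) := by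
    ext z
    simp only [Set.mem_inter_iff, Set.mem_Iic, Set.mem_Ioc, le_min_iff]
    tauto
  rw [withDensity_apply _ measurableSet_Iic, Measure.restrict_restrict measurableSet_Iic,
    Measure.restrict_apply measurableSet_Iic, hinter, Real.volume_Ioc, sub_zero]
  rcases le_total (min t 1) 0 with hs | hs
  · rw [Set.Ioc_eq_empty (not_lt.mpr hs), ENNReal.ofReal_of_nonpos hs]
    simp [zero_pow (Nat.one_le_iff_ne_zero.mp hm)]
  · generalize min t 1 = s at hs
    rw [lintegral_const_mul _ (by fun_prop), ← ofReal_integral_eq_lintegral_ofReal,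
      ← intervalIntegral.integral_of_le hs, integral_pow, ← ENNReal.ofReal_natCast,
      ← ENNReal.ofReal_mul (Nat.cast_nonneg m), ← ENNReal.ofReal_pow hs]
    · obtain ⟨j, rfl⟩ := Nat.exists_eq_add_of_le' hm
      congr 1
      simp only [Nat.add_sub_cancel]
      push_cast
      field_simp
      simp
    · exact (intervalIntegrable_iff_integrableOn_Ioc_of_le hs).mp
        ((continuous_pow (m - 1)).intervalIntegrable _ _)
    · filter_upwards [ae_restrict_mem measurableSet_Ioc] with z hz
      exact pow_nonneg hz.1.le _

lemma pi_withDensity_eq {ι : Type*} [Fintype ι] {X : ι → Type*} [∀ i, MeasurableSpace (X i)]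
    (μ : ∀ i, Measure (X i)) [∀ i, IsProbabilityMeasure (μ i)] {f : ∀ i, X i → ENNReal}
    (hf : ∀ i, Measurable (f i)) [∀ i, SigmaFinite ((μ i).withDensity (f i))] :
    Measure.pi (fun i => (μ i).withDensity (f i)) =
      (Measure.pi μ).withDensity (fun z => ∏ i, f i (z i)) := by
  refine Measure.pi_eq fun s hs => ?_
  have hg : ∀ i, Measurable ((s i).indicator (f i)) := fun i => (hf i).indicator (hs i)
  have hprod : (Set.univ.pi s).indicator (fun z => ∏ i, f i (z i)) =
      fun z => ∏ i, (s i).indicator (f i) (z i) := by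
    classical
    ext z
    by_cases hz : z ∈ Set.univ.pi s
    · rw [Set.indicator_of_mem hz]
      exact Finset.prod_congr rfl fun i _ => (Set.indicator_of_mem (hz i trivial) _).symm
    · rw [Set.indicator_of_notMem hz]
      simp only [Set.mem_univ_pi, not_forall] at hz
      obtain ⟨i, hi⟩ := hz
      exact (Finset.prod_eq_zero (Finset.mem_univ i) (Set.indicator_of_notMem hi _)).symm
  rw [withDensity_apply _ (.univ_pi hs), ← lintegral_indicator (.univ_pi hs), hprod]
  have h := lintegral_prod_eq_prod_lintegral_of_indepFun Finset.univ
    (fun i (z : ∀ i, X i) => (s i).indicator (f i) (z i))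
    (iIndepFun_pi (μ := μ) (X := fun i => (s i).indicator (f i)) fun i => (hg i).aemeasurable)
    (fun i => (hg i).comp (measurable_pi_apply i))
  rw [h]
  refine Finset.prod_congr rfl fun i _ => ?_
  rw [withDensity_apply _ (hs i), ← lintegral_indicator (hs i),
    ← (measurePreserving_eval μ i).lintegral_comp (hg i)]

lemma measurable_cell_sup {Ω ι κ : Type*} [MeasurableSpace Ω] [Fintype ι] [DecidableEq κ]
    {U : ι → Ω → ℝ} (hUmeas : ∀ i, Measurable (U i)) (x : ι → κ)
    (hne : ∀ k, (Finset.univ.filter (fun i => x i = k)).Nonempty) :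
    Measurable (fun ω k =>
      (Finset.univ.filter (fun i => x i = k)).sup' (hne k) (fun i => U i ω)) := by
  refine measurable_pi_lambda _ fun k => ?_
  have h := Finset.measurable_sup' (hne k) (f := U) fun i _ => hUmeas i
  convert h using 2 with ω
  simp

/-- The joint law of the maxima of independent uniform variables over nonempty cells. -/
lemma map_cell_sup_eq_withDensity
    {Ω ι κ : Type*} [MeasurableSpace Ω] (P : Measure Ω) [IsProbabilityMeasure P]
    [Fintype ι] [Fintype κ] [DecidableEq κ] (U : ι → Ω → ℝ) (hUmeas : ∀ i, Measurable (U i))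
    (hUindep : iIndepFun U P)
    (hUunif : ∀ i, Measure.map (U i) P = volume.restrict (Set.Ioc (0 : ℝ) 1))
    (x : ι → κ) (hne : ∀ k, (Finset.univ.filter (fun i => x i = k)).Nonempty) :
    P.map (fun ω k => (Finset.univ.filter (fun i => x i = k)).sup' (hne k) (fun i => U i ω)) =
      (Measure.pi fun _ : κ => volume.restrict (Set.Ioc (0 : ℝ) 1)).withDensity
        (fun z => ∏ k, (((Finset.univ.filter (fun i => x i = k)).card : ENNReal) *
          ENNReal.ofReal (z k ^ ((Finset.univ.filter (fun i => x i = k)).card - 1)))) := by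
  have : IsProbabilityMeasure (volume.restrict (Set.Ioc (0 : ℝ) 1)) := ⟨by simp⟩
  have hcard : ∀ k, 1 ≤ (Finset.univ.filter (fun i => x i = k)).card :=
    fun k => (hne k).card_pos
  have hZ : Measurable (fun ω k =>
      (Finset.univ.filter (fun i => x i = k)).sup' (hne k) (fun i => U i ω)) :=
    measurable_cell_sup hUmeas x hne
  generalize hc : (fun k => (Finset.univ.filter (fun i => x i = k)).card) = c at *
  have hc' : ∀ k, (Finset.univ.filter (fun i => x i = k)).card = c k := congrFun hc
  simp only [hc'] at hcard ⊢
  have hfin : ∀ k, IsFiniteMeasure ((volume.restrict (Set.Ioc (0 : ℝ) 1)).withDensity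
      (fun z => (c k : ENNReal) * ENNReal.ofReal (z ^ (c k - 1)))) := fun k => by
    refine isFiniteMeasure_withDensity (ne_top_of_le_ne_top (ENNReal.natCast_ne_top (c k)) ?_)
    calc ∫⁻ z in Set.Ioc (0 : ℝ) 1, (c k : ENNReal) * ENNReal.ofReal (z ^ (c k - 1))
        ≤ ∫⁻ z in Set.Ioc (0 : ℝ) 1, (c k : ENNReal) := by
          refine setLIntegral_mono measurable_const fun z hz => ?_
          refine mul_le_of_le_one_right' ?_
          exact ENNReal.ofReal_le_one.mpr (pow_le_one₀ hz.1.le hz.2)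
      _ = c k := by simp
  rw [← pi_withDensity_eq (fun _ : κ => volume.restrict (Set.Ioc (0 : ℝ) 1))
    (f := fun k z => (c k : ENNReal) * ENNReal.ofReal (z ^ (c k - 1))) (fun k => by fun_prop)]
  refine (Measure.pi_eq_generateFrom (C := fun _ => Set.range Set.Iic)
    (fun _ => ((borel_eq_generateFrom_Iic ℝ).symm.trans BorelSpace.measurable_eq.symm))
    (fun _ => isPiSystem_Iic)
    (fun k => ⟨fun j : ℕ => Set.Iic (j : ℝ), fun j => ⟨_, rfl⟩, fun j => measure_lt_top _ _, ?_⟩)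
    fun s hs => ?_).symm
  · refine Set.eq_univ_of_forall fun z => ?_
    obtain ⟨j, hj⟩ := exists_nat_ge z
    exact Set.mem_iUnion.mpr ⟨j, hj⟩
  · choose t ht using hs
    obtain rfl : (fun k => Set.Iic (t k)) = s := funext ht
    rw [Measure.map_apply hZ (.univ_pi fun _ => measurableSet_Iic)]
    have hpre : (fun ω k =>
          (Finset.univ.filter (fun i => x i = k)).sup' (hne k) (fun i => U i ω)) ⁻¹'
        (Set.univ.pi fun k => Set.Iic (t k)) =
        ⋂ i ∈ Finset.univ, U i ⁻¹' Set.Iic (t (x i)) := by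
      ext ω
      simp only [Set.mem_preimage, Set.mem_univ_pi, Set.mem_Iic, Finset.sup'_le_iff,
        Finset.mem_filter, Finset.mem_univ, true_and, Set.mem_iInter, forall_const]
      exact ⟨fun h i => h _ i rfl, fun h k i hi => hi ▸ h i⟩
    rw [hpre, hUindep.measure_inter_preimage_eq_mul Finset.univ
      (sets := fun i => Set.Iic (t (x i))) (fun _ _ => measurableSet_Iic)]
    simp_rw [← Measure.map_apply (hUmeas _) measurableSet_Iic, hUunif]
    rw [← Finset.prod_fiberwise (s := Finset.univ) (g := x)]
    refine Finset.prod_congr rfl fun k _ => ?_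
    rw [withDensity_uniform_Iic _ (hcard k), ← hc' k]
    refine Finset.prod_eq_pow_card fun i hi => ?_
    rw [(Finset.mem_filter.mp hi).2]

/-- Theorem 1, Dirichlet posterior of the Dirichlet-DSM: with `U i` i.i.d. uniform
on `[0,1]`, fixed labels with all cell counts `N k ≥ 1`, and `Z k = max {U i : x i = k}`, we have
`P(Σ Z k < 1) > 0`, and for every Borel set `A ⊆ ℝ^K`,
`P((Z 1,…,Z K) ∈ A ∣ Σ Z k < 1) = (∫_{A ∩ S} ∏ z k ^ (N k − 1) dz) / (∫_S ∏ z k ^ (N k − 1) dz)`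
where `S = {z : ∀ k, z k > 0 ∧ Σ z k < 1}`; i.e. conditionally on `Σ Z k < 1` the vector
`(1 − Σ Z k, Z 1, …, Z K)` is `Dirichlet(1, N 1, …, N K)`. -/
theorem dirichlet_dsm_stmt2
    {Ω : Type*} [MeasurableSpace Ω] (P : Measure Ω) [IsProbabilityMeasure P]
    {n K : ℕ} (U : Fin n → Ω → ℝ) (hUmeas : ∀ i, Measurable (U i))
    (hUindep : iIndepFun U P)
    (hUunif : ∀ i, Measure.map (U i) P = volume.restrict (Set.Icc (0 : ℝ) 1))
    (x : Fin n → Fin K)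
    (N : Fin K → ℕ) (hN : ∀ k, N k = (Finset.univ.filter (fun i => x i = k)).card)
    (hNpos : ∀ k, 1 ≤ N k)
    (hne : ∀ k, (Finset.univ.filter (fun i => x i = k)).Nonempty)
    (Z : Fin K → Ω → ℝ)
    (hZ : ∀ k ω, Z k ω = (Finset.univ.filter (fun i => x i = k)).sup' (hne k)
      (fun i => U i ω))
    (S : Set (Fin K → ℝ))
    (hS : S = {z | (∀ k, 0 < z k) ∧ ∑ k, z k < 1}) :
    0 < P {ω | ∑ k, Z k ω < 1} ∧
      ∀ A : Set (Fin K → ℝ), MeasurableSet A →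
        P ({ω | (fun k => Z k ω) ∈ A} ∩ {ω | ∑ k, Z k ω < 1}) / P {ω | ∑ k, Z k ω < 1} =
          (∫⁻ z in A ∩ S, ENNReal.ofReal (∏ k, z k ^ (N k - 1))) /
            (∫⁻ z in S, ENNReal.ofReal (∏ k, z k ^ (N k - 1))) := by
  obtain rfl : N = fun k => (Finset.univ.filter (fun i => x i = k)).card := funext hN
  obtain rfl : Z = fun k ω => (Finset.univ.filter (fun i => x i = k)).sup' (hne k)
      (fun i => U i ω) := funext fun k => funext (hZ k)
  set c : Fin K → ℕ := fun k => (Finset.univ.filter (fun i => x i = k)).card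
  have hlaw := map_cell_sup_eq_withDensity P U hUmeas hUindep
    (fun i => (hUunif i).trans (restrict_Ioc_eq_restrict_Icc).symm) x hne
  set Z : Ω → Fin K → ℝ := fun ω k => (Finset.univ.filter (fun i => x i = k)).sup' (hne k)
      (fun i => U i ω)
  have hZmeas : Measurable Z := measurable_cell_sup hUmeas x hne
  have hTopen : IsOpen {z : Fin K → ℝ | ∑ k, z k < 1} := isOpen_lt (by fun_prop) continuous_const
  have hSopen : IsOpen S := by
    have h : S = (⋂ k, {z : Fin K → ℝ | 0 < z k}) ∩ {z | ∑ k, z k < 1} := by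
      ext z
      simp [hS]
    rw [h]
    exact (isOpen_iInter_of_finite fun k => isOpen_lt continuous_const (by fun_prop)).inter hTopen
  have hcube : {z : Fin K → ℝ | ∑ k, z k < 1} ∩ Set.univ.pi (fun _ => Set.Ioc (0 : ℝ) 1) = S := by
    ext z
    simp only [hS, Set.mem_inter_iff, Set.mem_ofPred_eq, Set.mem_univ_pi, Set.mem_Ioc]
    refine ⟨fun h => ⟨fun k => (h.2 k).1, h.1⟩, fun h => ⟨h.2, fun k => ⟨h.1 k, ?_⟩⟩⟩
    exact (Finset.single_le_sum (fun j _ => (h.1 j).le) (Finset.mem_univ k)).trans h.2.le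
  set C : ENNReal := ∏ k, (c k : ENNReal)
  have hC0 : C ≠ 0 := Finset.prod_ne_zero_iff.mpr fun k _ =>
    Nat.cast_ne_zero.mpr (Nat.one_le_iff_ne_zero.mp (hNpos k))
  have hCtop : C ≠ ⊤ := ENNReal.prod_ne_top fun k _ => ENNReal.natCast_ne_top _
  have hjoint : ∀ A : Set (Fin K → ℝ), MeasurableSet A →
      P ({ω | Z ω ∈ A} ∩ {ω | ∑ k, Z ω k < 1}) =
        C * ∫⁻ z in A ∩ S, ENNReal.ofReal (∏ k, z k ^ (c k - 1)) := by
    intro A hA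
    have hAT := hA.inter hTopen.measurableSet
    change P (Z ⁻¹' (A ∩ {z | ∑ k, z k < 1})) = _
    rw [← Measure.map_apply hZmeas hAT, hlaw, withDensity_apply _ hAT, ← Measure.restrict_pi_pi,
      Measure.restrict_restrict hAT, Set.inter_assoc, hcube, ← volume_pi,
      ← lintegral_const_mul _ (by fun_prop)]
    refine setLIntegral_congr_fun (hA.inter hSopen.measurableSet) fun z hz => ?_
    have hz0 : ∀ k, 0 < z k := (hS ▸ hz.2 : z ∈ {z | (∀ k, 0 < z k) ∧ ∑ k, z k < 1}).1
    change ∏ k, ((c k : ENNReal) * ENNReal.ofReal (z k ^ (c k - 1))) = _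
    rw [Finset.prod_mul_distrib,
      ENNReal.ofReal_prod_of_nonneg fun k _ => pow_nonneg (hz0 k).le _]
  have htotal : P {ω | ∑ k, Z ω k < 1} =
      C * ∫⁻ z in S, ENNReal.ofReal (∏ k, z k ^ (c k - 1)) := by
    simpa using hjoint Set.univ .univ
  have hSne : S.Nonempty := by
    refine ⟨fun _ => 1 / (K + 1), ?_⟩
    rw [hS]
    refine ⟨fun _ => by positivity, ?_⟩
    simp only [Finset.sum_const, Finset.card_univ, Fintype.card_fin, nsmul_eq_mul]
    rw [mul_one_div, div_lt_one (by positivity)]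
    linarith
  have hIpos : 0 < ∫⁻ z in S, ENNReal.ofReal (∏ k, z k ^ (c k - 1)) := by
    rw [setLIntegral_pos_iff (by fun_prop)]
    refine (hSopen.measure_pos volume hSne).trans_le (measure_mono fun z hz => ⟨?_, hz⟩)
    have hz0 : ∀ k, 0 < z k := (hS ▸ hz : z ∈ {z | (∀ k, 0 < z k) ∧ ∑ k, z k < 1}).1
    exact (ENNReal.ofReal_pos.mpr (Finset.prod_pos fun k _ => pow_pos (hz0 k) _)).ne'
  change 0 < P {ω | ∑ k, Z ω k < 1} ∧ ∀ A : Set (Fin K → ℝ), MeasurableSet A →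
    P ({ω | Z ω ∈ A} ∩ {ω | ∑ k, Z ω k < 1}) / P {ω | ∑ k, Z ω k < 1} = _
  refine ⟨htotal ▸ ENNReal.mul_pos hC0 hIpos.ne', fun A hA => ?_⟩
  rw [hjoint A hA, htotal, ENNReal.mul_div_mul_left _ _ hC0 hCtop]
end

section
/- (Theorem 2, neutrality of the Simplex-DSM.) Let K ≥ 2, let θ_1 ∈ (0,1), and let θ_2, …, θ_K be strictly positive reals with Σ_{j=2}^K θ_j = 1 − θ_1. Let Z_1, …, Z_K be i.i.d. Exp(1) random variables. Define A = Z_1 / ((1 − θ_1) · min_{2 ≤ j ≤ K} (Z_j/θ_j)) and B = A/(1 + A). Then P(A ≤ a) = a/(a + 1) for every a ≥ 0, and B is uniformly distributed on [0,1]: P(B ≤ b) = b for every b ∈ [0,1]. (B is the random lower endpoint of the Simplex-DSM posterior interval [B, 1) for θ_1 given the relative probabilities θ_{−1} and a single observation X = 1.) -/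
open MeasureTheory ProbabilityTheory

/-- Survival function of the exponential distribution. -/
lemma expMeasure_Ici {r t : ℝ} (hr : 0 < r) (ht : 0 ≤ t) :
    expMeasure r (Set.Ici t) = ENNReal.ofReal (Real.exp (-(r * t))) := by
  have := isProbabilityMeasure_expMeasure hr
  have hatom : expMeasure r {t} = 0 :=
    withDensity_absolutelyContinuous volume _ (measure_singleton t)
  have hIoi : expMeasure r (Set.Ici t) = expMeasure r (Set.Ioi t) := by
    refine le_antisymm ?_ (measure_mono Set.Ioi_subset_Ici_self)
    rw [← Set.Ioi_insert, Set.insert_eq]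
    exact (measure_union_le _ _).trans (by rw [hatom, zero_add])
  rw [hIoi, ← Set.compl_Iic, prob_compl_eq_one_sub measurableSet_Iic, ← ofReal_cdf,
    cdf_expMeasure_eq hr, if_pos ht, ← ENNReal.ofReal_one,
    ← ENNReal.ofReal_sub _ (by simpa using mul_nonneg hr.le ht)]
  congr 1
  ring

/-- An exponential variable is almost surely positive. -/
lemma ae_pos_expMeasure {r : ℝ} (hr : 0 < r) : ∀ᵐ x ∂expMeasure r, 0 < x := by
  have := isProbabilityMeasure_expMeasure hr
  have h : expMeasure r (Set.Iic 0) = 0 := by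
    rw [← ofReal_cdf, cdf_expMeasure_eq hr]
    simp
  simpa [ae_iff, Set.Iic] using h

/-- Laplace transform of the exponential distribution. -/
lemma lintegral_exp_neg_mul_expMeasure {r s : ℝ} (hr : 0 < r) (hs : 0 ≤ s) :
    ∫⁻ x, ENNReal.ofReal (Real.exp (-(s * x))) ∂expMeasure r = ENNReal.ofReal (r / (r + s)) := by
  have hrs : 0 < r + s := by positivity
  have hdensity : expMeasure r = volume.withDensity (exponentialPDF r) := rfl
  have hmeas (q : ℝ) : Measurable (exponentialPDF q) :=
    (measurable_exponentialPDFReal q).ennreal_ofReal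
  rw [hdensity, lintegral_withDensity_eq_lintegral_mul _ (hmeas r) (by fun_prop)]
  have h (x : ℝ) : (exponentialPDF r * fun x ↦ ENNReal.ofReal (Real.exp (-(s * x)))) x =
      ENNReal.ofReal (r / (r + s)) * exponentialPDF (r + s) x := by
    rw [Pi.mul_apply]
    rcases lt_or_ge x 0 with hx | hx
    · simp [exponentialPDF_of_neg hx]
    · rw [exponentialPDF_of_nonneg hx, exponentialPDF_of_nonneg hx,
        ← ENNReal.ofReal_mul (by positivity), ← ENNReal.ofReal_mul (by positivity), mul_assoc,
        ← Real.exp_add, ← mul_assoc, div_mul_cancel₀ _ hrs.ne']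
      congr 3
      ring
  simp_rw [h]
  rw [lintegral_const_mul _ (hmeas _), lintegral_exponentialPDF_eq_one hrs, mul_one]

section

variable {Ω ι : Type*} [MeasurableSpace Ω] {P : Measure Ω} {Z : ι → Ω → ℝ} {θ : ι → ℝ}
  {S : Finset ι}

/-- The minimum of independent exponentials is exponential, with the rates adding up. -/
lemma measure_le_inf'_div_of_iIndepFun (hindep : iIndepFun Z P) (hZmeas : ∀ j, Measurable (Z j))
    (hlaw : ∀ j, Measure.map (Z j) P = expMeasure 1) (hθ : ∀ j ∈ S, 0 < θ j) (hS : S.Nonempty)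
    {t : ℝ} (ht : 0 ≤ t) :
    P {ω | t ≤ S.inf' hS (fun j ↦ Z j ω / θ j)} =
      ENNReal.ofReal (Real.exp (-((∑ j ∈ S, θ j) * t))) := by
  have hset : {ω | t ≤ S.inf' hS (fun j ↦ Z j ω / θ j)} =
      ⋂ j ∈ S, Z j ⁻¹' Set.Ici (t * θ j) := by
    ext ω
    simp only [Set.mem_ofPred_eq, Finset.le_inf'_iff, Set.mem_iInter, Set.mem_preimage, Set.mem_Ici]
    exact forall₂_congr fun j hj ↦ le_div_iff₀ (hθ j hj)
  rw [hset, hindep.measure_inter_preimage_eq_mul S fun j _ ↦ measurableSet_Ici,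
    Finset.sum_mul, ← Finset.sum_neg_distrib, Real.exp_sum,
    ENNReal.ofReal_prod_of_nonneg fun j _ ↦ (Real.exp_pos _).le]
  refine Finset.prod_congr rfl fun j hj ↦ ?_
  rw [← Measure.map_apply (hZmeas j) measurableSet_Ici, hlaw,
    expMeasure_Ici one_pos (mul_nonneg ht (hθ j hj).le), one_mul, mul_comm]

lemma indepFun_inf'_div_of_iIndepFun (hindep : iIndepFun Z P) (hZmeas : ∀ j, Measurable (Z j))
    (hS : S.Nonempty) {k : ι} (hk : k ∉ S) :
    IndepFun (Z k) (fun ω ↦ S.inf' hS (fun j ↦ Z j ω / θ j)) P := by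
  classical
  have h := hindep.indepFun_finset {k} S (by simpa using hk) hZmeas
  let minimum (v : S → ℝ) : ℝ := S.inf' hS fun j ↦ if hj : j ∈ S then v ⟨j, hj⟩ / θ j else 0
  have hminimum : Measurable minimum := by
    have : minimum = S.inf' hS
        fun j (v : S → ℝ) ↦ if hj : j ∈ S then v ⟨j, hj⟩ / θ j else 0 := by
      ext v
      simp [minimum]
    rw [this]
    refine Finset.inf'_induction hS _ (fun _ hf _ hg ↦ hf.inf hg) fun j hj ↦ ?_
    simp only [hj, dite_true]
    fun_prop
  have heval : Measurable fun v : ({k} : Finset ι) → ℝ ↦ v ⟨k, Finset.mem_singleton_self k⟩ :=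
    measurable_pi_apply _
  have hcomp : (fun ω ↦ S.inf' hS (fun j ↦ Z j ω / θ j)) = minimum ∘ fun ω (j : S) ↦ Z j ω := by
    ext ω
    exact Finset.inf'_congr hS rfl fun j hj ↦ by simp [hj]
  rw [hcomp]
  exact h.comp heval hminimum

/-- The distribution function of the ratio of an exponential variable to an independent minimum
of exponentials. -/
lemma measure_le_mul_inf'_div_of_iIndepFun [IsProbabilityMeasure P] (hindep : iIndepFun Z P)
    (hZmeas : ∀ j, Measurable (Z j)) (hlaw : ∀ j, Measure.map (Z j) P = expMeasure 1)
    (hθ : ∀ j ∈ S, 0 < θ j) (hS : S.Nonempty) {k : ι} (hk : k ∉ S) {c : ℝ} (hc : 0 < c) :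
    P {ω | Z k ω ≤ c * S.inf' hS (fun j ↦ Z j ω / θ j)} =
      ENNReal.ofReal (c / (c + ∑ j ∈ S, θ j)) := by
  set M : Ω → ℝ := fun ω ↦ S.inf' hS (fun j ↦ Z j ω / θ j) with hM
  have hMmeas : Measurable M := by
    have : M = S.inf' hS (fun j ω ↦ Z j ω / θ j) := by
      ext ω
      simp [hM]
    rw [this]
    exact Finset.inf'_induction hS _ (fun _ hf _ hg ↦ hf.inf hg) fun j _ ↦ (hZmeas j).div_const _
  have hprod := (indepFun_iff_map_prod_eq_prod_map_map (hZmeas k).aemeasurable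
    hMmeas.aemeasurable).1 (indepFun_inf'_div_of_iIndepFun (θ := θ) hindep hZmeas hS hk)
  have hmeas : MeasurableSet {p : ℝ × ℝ | p.1 ≤ c * p.2} :=
    measurableSet_le (by fun_prop) (by fun_prop)
  have hsum : 0 ≤ ∑ j ∈ S, θ j := Finset.sum_nonneg fun j hj ↦ (hθ j hj).le
  have := Measure.isProbabilityMeasure_map (μ := P) hMmeas.aemeasurable
  calc P {ω | Z k ω ≤ c * M ω}
      = P.map (fun ω ↦ (Z k ω, M ω)) {p : ℝ × ℝ | p.1 ≤ c * p.2} :=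
        (Measure.map_apply ((hZmeas k).prodMk hMmeas) hmeas).symm
    _ = ∫⁻ x, P.map M (Prod.mk x ⁻¹' {p : ℝ × ℝ | p.1 ≤ c * p.2}) ∂expMeasure 1 := by
        rw [hprod, Measure.prod_apply hmeas, hlaw]
    _ = ∫⁻ x, ENNReal.ofReal (Real.exp (-((∑ j ∈ S, θ j) / c * x))) ∂expMeasure 1 := by
        refine lintegral_congr_ae ?_
        filter_upwards [ae_pos_expMeasure one_pos] with x hx
        have hslice : M ⁻¹' (Prod.mk x ⁻¹' {p : ℝ × ℝ | p.1 ≤ c * p.2}) = {ω | x / c ≤ M ω} := by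
          ext ω
          simp [div_le_iff₀' hc]
        rw [Measure.map_apply hMmeas (measurable_prodMk_left hmeas), hslice,
          measure_le_inf'_div_of_iIndepFun hindep hZmeas hlaw hθ hS (by positivity)]
        congr 3
        ring
    _ = ENNReal.ofReal (c / (c + ∑ j ∈ S, θ j)) := by
        rw [lintegral_exp_neg_mul_expMeasure one_pos (by positivity)]
        congr 1
        field_simp

end

/-- Theorem 2, neutrality of the Simplex-DSM: with `K ≥ 2`, `θ 0 ∈ (0,1)`,
`θ j > 0` for `j ≠ 0` summing to `1 − θ 0`, and `Z 0, …, Z (K−1)` i.i.d. `Exp(1)`, the variable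
`A = Z 0 / ((1 − θ 0) · min_{j ≠ 0} (Z j / θ j))` satisfies `P(A ≤ a) = a/(a+1)` for `a ≥ 0`,
and `B = A / (1 + A)` is uniform on `[0,1]`. -/
theorem dirichlet_dsm_stmt8
    {Ω : Type*} [MeasurableSpace Ω] (P : Measure Ω) [IsProbabilityMeasure P]
    {K : ℕ} (hK : 2 ≤ K)
    (Z : Fin K → Ω → ℝ) (hZmeas : ∀ j, Measurable (Z j))
    (hindep : iIndepFun Z P)
    (hlaw : ∀ j, Measure.map (Z j) P = expMeasure 1)
    (θ : Fin K → ℝ) (k0 : Fin K) (hk0 : k0 = ⟨0, by omega⟩)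
    (hθ0 : θ k0 ∈ Set.Ioo (0 : ℝ) 1)
    (hθpos : ∀ j, j ≠ k0 → 0 < θ j)
    (hθsum : ∑ j ∈ Finset.univ.erase k0, θ j = 1 - θ k0)
    (hne : (Finset.univ.erase k0).Nonempty)
    (A B : Ω → ℝ)
    (hA : ∀ ω, A ω = Z k0 ω /
      ((1 - θ k0) * (Finset.univ.erase k0).inf' hne (fun j => Z j ω / θ j)))
    (hB : ∀ ω, B ω = A ω / (1 + A ω)) :
    (∀ a : ℝ, 0 ≤ a → P {ω | A ω ≤ a} = ENNReal.ofReal (a / (a + 1))) ∧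
      (∀ b ∈ Set.Icc (0 : ℝ) 1, P {ω | B ω ≤ b} = ENNReal.ofReal b) := by
  have hpos : ∀ᵐ ω ∂P, ∀ j, 0 < Z j ω := ae_all_iff.2 fun j ↦
    ae_of_ae_map (hZmeas j).aemeasurable (by simpa only [hlaw j] using ae_pos_expMeasure one_pos)
  have hθ1 : 0 < 1 - θ k0 := sub_pos.2 hθ0.2
  have hMpos : ∀ᵐ ω ∂P, 0 < (Finset.univ.erase k0).inf' hne (fun j ↦ Z j ω / θ j) := by
    filter_upwards [hpos] with ω hω
    exact (Finset.lt_inf'_iff hne).2 fun j hj ↦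
      div_pos (hω j) (hθpos j (Finset.ne_of_mem_erase hj))
  have hApos : ∀ᵐ ω ∂P, 0 < A ω := by
    filter_upwards [hpos, hMpos] with ω hω hM
    rw [hA]
    exact div_pos (hω k0) (mul_pos hθ1 hM)
  have hAcdf (a : ℝ) (ha : 0 ≤ a) : P {ω | A ω ≤ a} = ENNReal.ofReal (a / (a + 1)) := by
    rcases ha.eq_or_lt with rfl | ha
    · simpa [ae_iff] using hApos
    · have hevent : {ω | A ω ≤ a} =ᵐ[P] {ω | Z k0 ω ≤ a * (1 - θ k0) *
          (Finset.univ.erase k0).inf' hne (fun j ↦ Z j ω / θ j)} := by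
        filter_upwards [hMpos] with ω hM
        refine propext (?_ : A ω ≤ a ↔ Z k0 ω ≤ _)
        rw [hA, div_le_iff₀ (mul_pos hθ1 hM), mul_assoc]
      rw [measure_congr hevent, measure_le_mul_inf'_div_of_iIndepFun hindep hZmeas hlaw
        (fun j hj ↦ hθpos j (Finset.ne_of_mem_erase hj)) hne (Finset.notMem_erase _ _)
        (mul_pos ha hθ1), hθsum]
      congr 1
      field_simp
  refine ⟨hAcdf, fun b ⟨hb0, hb1⟩ ↦ ?_⟩
  rcases hb1.eq_or_lt with rfl | hb1
  · have hle : ∀ᵐ ω ∂P, B ω ≤ 1 := by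
      filter_upwards [hApos] with ω hω
      rw [hB, div_le_one (by positivity)]
      linarith
    rw [ENNReal.ofReal_one, ← measure_univ (μ := P)]
    exact measure_congr (Filter.eventuallyEq_univ.2 hle)
  · have hb : 0 < 1 - b := sub_pos.2 hb1
    have hevent : {ω | B ω ≤ b} =ᵐ[P] {ω | A ω ≤ b / (1 - b)} := by
      filter_upwards [hApos] with ω hω
      refine propext (?_ : B ω ≤ b ↔ A ω ≤ b / (1 - b))
      rw [hB, div_le_iff₀ (by positivity), le_div_iff₀ hb]
      constructor <;> intro h <;> linarith
    rw [measure_congr hevent, hAcdf _ (by positivity)]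
    congr 1
    field_simp
    ring
end

section
/- (Theorem 3, conditional mass of the vacuous focal element in the Simplex-DSM.) Let K ≥ 2 and let Z_1, …, Z_K be i.i.d. Exp(1) random variables. Then for every p ∈ (0,1), P( min_{2 ≤ j ≤ K} Z_j ≥ ((1 − p)/p) · Z_1 | Z_1/(Z_1 + ⋯ + Z_K) ≤ p ) = 1 / ( (1 + (K − 2)(1 − p)) · (1 + Σ_{i=1}^{K−2} (1 − p)^i) ). -/
open MeasureTheory ProbabilityTheory

/-- For independent `Y` and `X`, the probability of `(Y, X) ∈ D` is the average over `Y` of the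
probability that `X` lies in the corresponding section of `D`. -/
lemma measure_prodMk_mem_eq_lintegral {Ω β γ : Type*} [MeasurableSpace Ω] [MeasurableSpace β]
    [MeasurableSpace γ] {P : Measure Ω} [IsProbabilityMeasure P] {Y : Ω → β} {X : Ω → γ}
    (hY : Measurable Y) (hX : Measurable X) (hindep : IndepFun Y X P)
    {D : Set (β × γ)} (hD : MeasurableSet D) :
    P {ω | (Y ω, X ω) ∈ D} = ∫⁻ ω, P {ω' | (Y ω, X ω') ∈ D} ∂P := by
  have hmap := hindep.map_prod_eq_prod_map_map hY.aemeasurable hX.aemeasurable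
  have hP : P {ω | (Y ω, X ω) ∈ D} = P.map (fun ω => (Y ω, X ω)) D :=
    (Measure.map_apply (hY.prodMk hX) hD).symm
  have := Measure.isProbabilityMeasure_map (μ := P) hX.aemeasurable
  rw [hP, hmap, Measure.prod_apply hD, lintegral_map (measurable_measure_prodMk_left hD) hY]
  refine lintegral_congr fun ω => ?_
  rw [Measure.map_apply hX (measurable_prodMk_left hD)]
  rfl

/-- The Laplace transform of the standard exponential distribution. -/
lemma lintegral_exp_neg_mul_expMeasure_one {s : ℝ} (hs : 0 ≤ s) :
    ∫⁻ x, ENNReal.ofReal (Real.exp (-(s * x))) ∂(expMeasure 1) = ENNReal.ofReal (1 / (1 + s)) := by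
  have hs1 : 0 < 1 + s := by linarith
  have hpdf (r : ℝ) : Measurable (exponentialPDF r) :=
    (measurable_exponentialPDFReal r).ennreal_ofReal
  have hmeas : expMeasure 1 = volume.withDensity (exponentialPDF 1) := rfl
  rw [hmeas, lintegral_withDensity_eq_lintegral_mul _ (hpdf 1) (by fun_prop)]
  calc _ = ∫⁻ x, ENNReal.ofReal (1 / (1 + s)) * exponentialPDF (1 + s) x := by
        refine lintegral_congr fun x => ?_
        rcases lt_or_ge x 0 with hx | hx
        · simp [exponentialPDF_of_neg hx]
        · rw [Pi.mul_apply, exponentialPDF_of_nonneg hx, exponentialPDF_of_nonneg hx,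
            ← ENNReal.ofReal_mul (by positivity), ← ENNReal.ofReal_mul (by positivity)]
          rw [one_mul, ← Real.exp_add, ← mul_assoc, one_div_mul_cancel hs1.ne', one_mul]
          ring_nf
    _ = _ := by
        rw [lintegral_const_mul _ (hpdf _), lintegral_exponentialPDF_eq_one hs1, mul_one]

lemma expMeasure_one_Ioi {t : ℝ} (ht : 0 ≤ t) :
    expMeasure 1 (Set.Ioi t) = ENNReal.ofReal (Real.exp (-t)) := by
  have := isProbabilityMeasure_expMeasure one_pos
  have hcdf := cdf_expMeasure_eq one_pos t
  rw [if_pos ht, one_mul] at hcdf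
  rw [← Set.compl_Iic, prob_compl_eq_one_sub measurableSet_Iic, ← ofReal_cdf, hcdf,
    ← ENNReal.ofReal_one, ← ENNReal.ofReal_sub]
  · congr 1
    ring
  · simpa using ht

lemma expMeasure_one_Ici {t : ℝ} (ht : 0 ≤ t) :
    expMeasure 1 (Set.Ici t) = ENNReal.ofReal (Real.exp (-t)) := by
  have : NullSingletonClass (expMeasure 1) :=
    inferInstanceAs (NullSingletonClass (volume.withDensity (exponentialPDF 1)))
  rw [← expMeasure_one_Ioi ht, measure_congr Ioi_ae_eq_Ici]

section StandardExponential

variable {Ω ι : Type*} [MeasurableSpace Ω] {P : Measure Ω}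

lemma lintegral_exp_neg_mul_of_map_eq {X : Ω → ℝ} (hX : Measurable X)
    (hlaw : P.map X = expMeasure 1) {s : ℝ} (hs : 0 ≤ s) :
    ∫⁻ ω, ENNReal.ofReal (Real.exp (-(s * X ω))) ∂P = ENNReal.ofReal (1 / (1 + s)) := by
  rw [← lintegral_exp_neg_mul_expMeasure_one hs, ← hlaw, lintegral_map (by fun_prop) hX]

variable [IsProbabilityMeasure P] {Z : ι → Ω → ℝ}

lemma ae_pos_of_map_eq_expMeasure_one {X : Ω → ℝ} (hX : Measurable X)
    (hlaw : P.map X = expMeasure 1) : ∀ᵐ ω ∂P, 0 < X ω := by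
  have h : P.map X (Set.Ioi 0) = 1 := by simp [hlaw, expMeasure_one_Ioi le_rfl]
  rw [Measure.map_apply hX measurableSet_Ioi] at h
  exact (mem_ae_iff_prob_eq_one (hX measurableSet_Ioi)).2 h

/-- The event that `c` times one standard exponential variable is at most each of finitely many
other ones. -/
lemma measure_forall_mul_le (hmeas : ∀ j, Measurable (Z j)) (hindep : iIndepFun Z P)
    (hlaw : ∀ j, P.map (Z j) = expMeasure 1) {S : Finset ι} {k : ι} (hk : k ∉ S)
    {c : ℝ} (hc : 0 ≤ c) :
    P {ω | ∀ j ∈ S, c * Z k ω ≤ Z j ω} = ENNReal.ofReal (1 / (1 + S.card * c)) := by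
  have hind : IndepFun (Z k) (fun ω (j : S) => Z j ω) P :=
    (hindep.indepFun_finset {k} S (by simpa using hk) hmeas).comp
      (measurable_pi_apply (⟨k, by simp⟩ : ({k} : Finset ι))) measurable_id
  have hD : MeasurableSet {q : ℝ × (S → ℝ) | ∀ j, c * q.1 ≤ q.2 j} := by
    rw [Set.ofPred_forall]
    exact MeasurableSet.iInter fun j => measurableSet_le (by fun_prop) (by fun_prop)
  have h := measure_prodMk_mem_eq_lintegral (hmeas k) (by fun_prop) hind hD
  simp only [Set.mem_ofPred_eq, Subtype.forall] at h
  rw [h, ← lintegral_exp_neg_mul_of_map_eq (hmeas k) (hlaw k) (by positivity)]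
  refine lintegral_congr_ae ?_
  filter_upwards [ae_pos_of_map_eq_expMeasure_one (hmeas k) (hlaw k)] with ω hω
  have hset : {ω' | ∀ j ∈ S, c * Z k ω ≤ Z j ω'} = ⋂ j ∈ S, Z j ⁻¹' Set.Ici (c * Z k ω) := by
    ext; simp
  rw [hset, hindep.meas_biInter fun j _ => ⟨_, measurableSet_Ici, rfl⟩,
    Finset.prod_congr rfl fun j _ => by
      rw [← Measure.map_apply (hmeas j) measurableSet_Ici, hlaw j,
        expMeasure_one_Ici (by positivity)],
    Finset.prod_const, ← ENNReal.ofReal_pow (by positivity), ← Real.exp_nat_mul]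
  congr 2
  ring

/-- The event that a standard exponential variable exceeds `c` times the sum of finitely many
other ones. -/
lemma measure_mul_sum_lt (hmeas : ∀ j, Measurable (Z j)) (hindep : iIndepFun Z P)
    (hlaw : ∀ j, P.map (Z j) = expMeasure 1) {S : Finset ι} {k : ι} (hk : k ∉ S)
    {c : ℝ} (hc : 0 ≤ c) :
    P {ω | c * ∑ j ∈ S, Z j ω < Z k ω} = ENNReal.ofReal (1 / (1 + c)) ^ S.card := by
  have hind : IndepFun (fun ω => ∑ j ∈ S, Z j ω) (Z k) P := by
    simpa [Finset.sum_fn] using hindep.indepFun_finsetSum_of_notMem hmeas hk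
  have hD : MeasurableSet {q : ℝ × ℝ | c * q.1 < q.2} :=
    measurableSet_lt (by fun_prop) (by fun_prop)
  have h := measure_prodMk_mem_eq_lintegral (by fun_prop) (hmeas k) hind hD
  simp only [Set.mem_ofPred_eq] at h
  have hpos : ∀ᵐ ω ∂P, ∀ j ∈ S, 0 < Z j ω := by
    rw [Finset.eventually_all]
    exact fun j _ => ae_pos_of_map_eq_expMeasure_one (hmeas j) (hlaw j)
  have hexp : ∀ᵐ ω ∂P, P {ω' | c * ∑ j ∈ S, Z j ω < Z k ω'} =
      ∏ j ∈ S, ENNReal.ofReal (Real.exp (-(c * Z j ω))) := by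
    filter_upwards [hpos] with ω hω
    have hsum : 0 ≤ c * ∑ j ∈ S, Z j ω :=
      mul_nonneg hc (Finset.sum_nonneg fun j hj => (hω j hj).le)
    rw [← ENNReal.ofReal_prod_of_nonneg fun j _ => (Real.exp_pos _).le, ← Real.exp_sum,
      Finset.sum_neg_distrib, ← Finset.mul_sum, ← expMeasure_one_Ioi hsum, ← hlaw k,
      Measure.map_apply (hmeas k) measurableSet_Ioi]
    rfl
  have hprod := (hindep.comp (fun _ x => ENNReal.ofReal (Real.exp (-(c * x))))
    fun _ => by fun_prop)
  rw [h, lintegral_congr_ae hexp]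
  calc ∫⁻ ω, ∏ j ∈ S, ENNReal.ofReal (Real.exp (-(c * Z j ω))) ∂P
      = ∏ j ∈ S, ∫⁻ ω, ENNReal.ofReal (Real.exp (-(c * Z j ω))) ∂P :=
        lintegral_prod_eq_prod_lintegral_of_indepFun S _ hprod fun j => by fun_prop
    _ = _ := by
        simp_rw [lintegral_exp_neg_mul_of_map_eq (hmeas _) (hlaw _) hc, Finset.prod_const]

end StandardExponential

/-- Theorem 3, conditional mass of the vacuous focal element in the Simplex-DSM:
for `K ≥ 2`, i.i.d. `Exp(1)` variables `Z 0, …, Z (K−1)`, and `p ∈ (0,1)`,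
`P(min_{j ≠ 0} Z j ≥ ((1−p)/p) Z 0 ∣ Z 0 / Σ Z ≤ p)
  = 1 / ((1 + (K−2)(1−p)) (1 + Σ_{i=1}^{K−2} (1−p)^i))`. -/
theorem dirichlet_dsm_stmt12
    {Ω : Type*} [MeasurableSpace Ω] (P : Measure Ω) [IsProbabilityMeasure P]
    {K : ℕ} (hK : 2 ≤ K)
    (Z : Fin K → Ω → ℝ) (hZmeas : ∀ j, Measurable (Z j))
    (hindep : iIndepFun Z P)
    (hlaw : ∀ j, Measure.map (Z j) P = expMeasure 1)
    (k0 : Fin K) (hk0 : k0 = ⟨0, by omega⟩)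
    (hne : (Finset.univ.erase k0).Nonempty) :
    ∀ p : ℝ, p ∈ Set.Ioo (0 : ℝ) 1 →
      P ({ω | ((1 - p) / p) * Z k0 ω ≤ (Finset.univ.erase k0).inf' hne (fun j => Z j ω)} ∩
          {ω | Z k0 ω / ∑ j, Z j ω ≤ p}) / P {ω | Z k0 ω / ∑ j, Z j ω ≤ p} =
        ENNReal.ofReal (1 / ((1 + ((K : ℝ) - 2) * (1 - p)) *
          (1 + ∑ i ∈ Finset.range (K - 2), (1 - p) ^ (i + 1)))) := by
  rintro p ⟨hp0, hp1⟩
  have hq : 0 < 1 - p := sub_pos.2 hp1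
  have hcard : (Finset.univ.erase k0).card = K - 1 := by simp
  have hcast : ((K - 1 : ℕ) : ℝ) = (K : ℝ) - 1 := by push_cast [show 1 ≤ K by omega]; rfl
  have hK' : (2 : ℝ) ≤ K := by exact_mod_cast hK
  have hpos : ∀ᵐ ω ∂P, ∀ j, 0 < Z j ω :=
    ae_all_iff.2 fun j => ae_pos_of_map_eq_expMeasure_one (hZmeas j) (hlaw j)
  have hsplit (ω : Ω) : ∑ j, Z j ω = Z k0 ω + ∑ j ∈ Finset.univ.erase k0, Z j ω :=
    (Finset.add_sum_erase _ _ (Finset.mem_univ k0)).symm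
  have hcond : P {ω | Z k0 ω / ∑ j, Z j ω ≤ p} = ENNReal.ofReal (1 - (1 - p) ^ (K - 1)) := by
    have hlt := measure_mul_sum_lt hZmeas hindep hlaw (Finset.notMem_erase k0 Finset.univ)
      (c := p / (1 - p)) (by positivity)
    have hcompl : {ω | Z k0 ω / ∑ j, Z j ω ≤ p} =ᵐ[P]
        ({ω | p / (1 - p) * ∑ j ∈ Finset.univ.erase k0, Z j ω < Z k0 ω}ᶜ : Set Ω) := by
      rw [Filter.eventuallyEq_set]
      filter_upwards [hpos] with ω hω
      have hsum : 0 < ∑ j, Z j ω := Finset.sum_pos (fun j _ => hω j) ⟨k0, Finset.mem_univ _⟩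
      rw [Set.mem_compl_iff, Set.mem_ofPred_eq, not_lt, div_le_iff₀ hsum, hsplit,
        div_mul_eq_mul_div, le_div_iff₀ hq]
      constructor <;> intro h <;> linarith
    have hfrac : 1 / (1 + p / (1 - p)) = 1 - p := by field_simp; ring
    rw [measure_congr hcompl, prob_compl_eq_one_sub
      (measurableSet_lt (by fun_prop) (hZmeas k0)), hlt, hfrac, hcard,
      ← ENNReal.ofReal_pow hq.le, ← ENNReal.ofReal_one, ← ENNReal.ofReal_sub _ (by positivity)]
  have hinter : P ({ω | ((1 - p) / p) * Z k0 ω ≤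
        (Finset.univ.erase k0).inf' hne (fun j => Z j ω)} ∩ {ω | Z k0 ω / ∑ j, Z j ω ≤ p}) =
      ENNReal.ofReal (p / (1 + ((K : ℝ) - 2) * (1 - p))) := by
    have hle := measure_forall_mul_le hZmeas hindep hlaw (Finset.notMem_erase k0 Finset.univ)
      (c := (1 - p) / p) (by positivity)
    have hset : ({ω | ((1 - p) / p) * Z k0 ω ≤ (Finset.univ.erase k0).inf' hne
        (fun j => Z j ω)} ∩ {ω | Z k0 ω / ∑ j, Z j ω ≤ p} : Set Ω) =ᵐ[P]
        {ω | ∀ j ∈ Finset.univ.erase k0, (1 - p) / p * Z k0 ω ≤ Z j ω} := by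
      rw [Filter.eventuallyEq_set]
      filter_upwards [hpos] with ω hω
      have hsum : 0 < ∑ j, Z j ω := Finset.sum_pos (fun j _ => hω j) ⟨k0, Finset.mem_univ _⟩
      simp only [Set.mem_inter_iff, Set.mem_ofPred_eq, Finset.le_inf'_iff]
      refine and_iff_left_of_imp fun h => ?_
      obtain ⟨i, hi⟩ := hne
      have hi' := (h i hi).trans
        (Finset.single_le_sum (f := fun j => Z j ω) (fun j _ => (hω j).le) hi)
      rw [div_mul_eq_mul_div, div_le_iff₀ hp0] at hi'
      rw [div_le_iff₀ hsum, hsplit]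
      linarith
    rw [measure_congr hset, hle, hcard, hcast]
    congr 1
    have : 0 < 1 + ((K : ℝ) - 2) * (1 - p) := by nlinarith
    have : 0 < 1 + ((K : ℝ) - 1) * ((1 - p) / p) := by
      have : 0 ≤ ((K : ℝ) - 1) * ((1 - p) / p) := mul_nonneg (by linarith) (by positivity)
      linarith
    rw [div_eq_div_iff (by positivity) (by positivity)]
    field_simp
    ring
  have hgeom : 1 - (1 - p) ^ (K - 1) =
      p * (1 + ∑ i ∈ Finset.range (K - 2), (1 - p) ^ (i + 1)) := by
    have h := mul_neg_geom_sum (1 - p) (K - 1)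
    rw [show K - 1 = K - 2 + 1 by omega, Finset.sum_range_succ'] at h
    rw [show K - 1 = K - 2 + 1 by omega, ← h]
    ring
  have hgpos : 0 < 1 + ∑ i ∈ Finset.range (K - 2), (1 - p) ^ (i + 1) := by positivity
  rw [hinter, hcond, hgeom, ← ENNReal.ofReal_div_of_pos (by positivity)]
  congr 1
  rw [div_div, mul_left_comm, ← div_div, div_self hp0.ne']
end
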